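/- arXiv:2605.02254 — 6 statements merged into one kernel-verified Lean document; each statement's English description precedes it below -/
import Mathlib

section
/- Let n ≥ 2 and let S_2 be a subset of the cyclic subgroup ⟨a⟩ of the dihedral group D_n. Then η_h(S_2) = 0 for every integer h with 1 ≤ h ≤ ⌊(n−1)/2⌋ if and only if: when n is odd, S_2 ∈ {∅, ⟨a⟩}; and when n is even, S_2 ∈ {∅, ⟨a⟩, ⟨a²⟩, a⟨a²⟩}, where ⟨a²⟩ = {a^{2k} : 0 ≤ k ≤ n/2 − 1} and a⟨a²⟩ = {a^{2k+1} : 0 ≤ k ≤ n/2 − 1}. -/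
/-!
The sum `η_h(C)` is the discrete Fourier transform, at frequency `-h`, of the indicator `f` of
`{k : a^k ∈ C}` on `ℤ/n`. Since `f` is real, the transform at `-x` is the conjugate of the one at
`x`; hence the vanishing of `η_h(C)` for `1 ≤ h ≤ ⌊(n-1)/2⌋` says that the transform vanishes at
every frequency `x` with `2x ≠ 0`. Translation of `f` by `2` multiplies the transform at `x` by a
root of unity that equals `1` exactly when `2x = 0`, so by injectivity of the transform the
vanishing condition is equivalent to `f(k + 2) = f(k)` for all `k` (`eta_zero_iff`).

A set invariant under translation by `2` is a union of parity classes (`mem_parity`). For even `n`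
there are two such classes, giving the four listed sets; for odd `n` they coincide because
`n ≡ 0`, leaving only the empty set and the whole rotation subgroup.
-/


open Polynomial Matrix

noncomputable section

namespace PaperPST

/-! ### Grover-walk PST data for Cayley graphs over a general finite group -/

/-- The adjacency matrix of the Cayley graph `Cay(Γ, S)`: `A u v = 1` iff `u * v⁻¹ ∈ S`. -/
def adjG (Γ : Type*) [Group Γ] [Fintype Γ] [DecidableEq Γ] (S : Finset Γ) : Matrix Γ Γ ℂ :=
  Matrix.of fun u v => if u * v⁻¹ ∈ S then 1 else 0

/-- The discriminant matrix `P = (1/|S|) A` of `Cay(Γ, S)`. -/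
def discG (Γ : Type*) [Group Γ] [Fintype Γ] [DecidableEq Γ] (S : Finset Γ) : Matrix Γ Γ ℂ :=
  (S.card : ℂ)⁻¹ • adjG Γ S

/-- `T_τ(P)`, the `τ`-th Chebyshev polynomial of the first kind evaluated at the
discriminant matrix of `Cay(Γ, S)`. -/
def chebG (Γ : Type*) [Group Γ] [Fintype Γ] [DecidableEq Γ] (S : Finset Γ) (τ : ℕ) :
    Matrix Γ Γ ℂ :=
  Polynomial.aeval (discG Γ S) (Polynomial.Chebyshev.T ℂ τ)

/-- Perfect state transfer between vertices `u` and `v` of `Cay(Γ, S)` at time `τ`: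
`T_τ(P) e_u = e_v`. -/
def PSTG (Γ : Type*) [Group Γ] [Fintype Γ] [DecidableEq Γ] (S : Finset Γ) (τ : ℕ)
    (u v : Γ) : Prop :=
  chebG Γ S τ *ᵥ Pi.single u 1 = Pi.single v 1

/-- Evaluation of the `τ`-th Chebyshev polynomial of the first kind at a complex number. -/
def Teval (τ : ℕ) (x : ℂ) : ℂ := (Polynomial.Chebyshev.T ℂ τ).eval x

/-! ### Specialization to the dihedral group `D_n` -/

/-- Test whether an element of the dihedral group is a rotation `a^k`. -/
def isRot {n : ℕ} : DihedralGroup n → Bool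
  | .r _ => true
  | .sr _ => false

/-- The adjacency matrix of the Cayley graph `Cay(D_n, S)`. -/
def adjC (n : ℕ) (S : Finset (DihedralGroup n)) :
    Matrix (DihedralGroup n) (DihedralGroup n) ℂ :=
  Matrix.of fun u v => if u * v⁻¹ ∈ S then 1 else 0

/-- The discriminant matrix `P = (1/|S|) A` of `Cay(D_n, S)`. -/
def disc (n : ℕ) (S : Finset (DihedralGroup n)) :
    Matrix (DihedralGroup n) (DihedralGroup n) ℂ :=
  (S.card : ℂ)⁻¹ • adjC n S

/-- `T_τ(P)`, the `τ`-th Chebyshev polynomial of the first kind evaluated at the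
discriminant matrix. -/
def chebP (n : ℕ) [NeZero n] (S : Finset (DihedralGroup n)) (τ : ℕ) :
    Matrix (DihedralGroup n) (DihedralGroup n) ℂ :=
  Polynomial.aeval (disc n S) (Polynomial.Chebyshev.T ℂ τ)

/-- Perfect state transfer between vertices `u` and `v` of `Cay(D_n, S)` at time `τ`:
`T_τ(P) e_u = e_v`. -/
def PST (n : ℕ) [NeZero n] (S : Finset (DihedralGroup n)) (τ : ℕ)
    (u v : DihedralGroup n) : Prop :=
  chebP n S τ *ᵥ Pi.single u 1 = Pi.single v 1

/-- `ω = e^{2πi/n}`. -/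
def omega (n : ℕ) : ℂ := Complex.exp (2 * Real.pi * Complex.I / n)

/-- `η_h(C) = Σ_{0 ≤ k ≤ n-1, a^k ∈ C} ω^{hk}`. -/
def eta (n : ℕ) (h : ℕ) (C : Finset (DihedralGroup n)) : ℂ :=
  ∑ k ∈ Finset.range n, if DihedralGroup.r (k : ZMod n) ∈ C then omega n ^ (h * k) else 0

/-- `S_1 = S ∩ ⟨a⟩`. -/
def S1 (n : ℕ) (S : Finset (DihedralGroup n)) : Finset (DihedralGroup n) :=
  S.filter fun x => isRot x

/-- `S_2 = bS ∩ ⟨a⟩`, i.e. `{a^k : b a^k ∈ S}`. -/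
def S2 (n : ℕ) (S : Finset (DihedralGroup n)) : Finset (DihedralGroup n) :=
  (S.image fun s => DihedralGroup.sr 0 * s).filter fun x => isRot x

/-- `S_2⁻¹ = {s⁻¹ : s ∈ S_2}`. -/
def S2inv (n : ℕ) (S : Finset (DihedralGroup n)) : Finset (DihedralGroup n) :=
  (S2 n S).image fun x => x⁻¹

/-- The number of `a^k ∈ C` with `0 ≤ k ≤ n-1` and `k % 2 = p`. -/
def dcnt (n : ℕ) (C : Finset (DihedralGroup n)) (p : ℕ) : ℕ :=
  ((Finset.range n).filter fun k => k % 2 = p ∧ DihedralGroup.r (k : ZMod n) ∈ C).card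

/-- Vertex labels `0, …, 2n-1`: label `u < n` is `a^u`, and label `n ≤ u < 2n` is `b a^{u-n}`. -/
def lab (n : ℕ) (u : ℕ) : DihedralGroup n :=
  if u < n then DihedralGroup.r (u : ZMod n) else DihedralGroup.sr ((u - n : ℕ) : ZMod n)

/-- `Cay(D_n, S)` is a normal Cayley graph if `S` is closed under conjugation. -/
def IsNormalCay (n : ℕ) (S : Finset (DihedralGroup n)) : Prop :=
  ∀ g : DihedralGroup n, ∀ s ∈ S, g * s * g⁻¹ ∈ S

/-- `Cay(D_n, S)` exhibits PST at the minimum time `τ`. -/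
def exhibitsMinPST (n : ℕ) [NeZero n] (S : Finset (DihedralGroup n)) (τ : ℕ) : Prop :=
  (∃ u v : DihedralGroup n, u ≠ v ∧ PST n S τ u v) ∧
  ∀ σ : ℕ, 1 ≤ σ → σ < τ → ∀ u v : DihedralGroup n, u ≠ v → ¬ PST n S σ u v

/-! ### Eigenvector candidates -/

/-- The all-ones vector. -/
def w1 (n : ℕ) : DihedralGroup n → ℂ := fun _ => 1

/-- The vector which is `1` on `G_0` and `-1` on `G_1`. -/
def w2 (n : ℕ) : DihedralGroup n → ℂ
  | .r _ => 1
  | .sr _ => -1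

/-- The vector with entry `(-1)^k` at `a^k` and `(-1)^k` at `b a^k`. -/
def w3 (n : ℕ) : DihedralGroup n → ℂ
  | .r k => (-1) ^ k.val
  | .sr k => (-1) ^ k.val

/-- The vector with entry `(-1)^k` at `a^k` and `(-1)^{k+1}` at `b a^k`. -/
def w4 (n : ℕ) : DihedralGroup n → ℂ
  | .r k => (-1) ^ k.val
  | .sr k => (-1) ^ (k.val + 1)

/-- The vector with entry `ω^{hk}` at `a^k` and `0` at `b a^k`. -/
def uv1 (n h : ℕ) : DihedralGroup n → ℂ
  | .r k => omega n ^ (h * k.val)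
  | .sr _ => 0

/-- The vector with entry `0` at `a^k` and `ω^{hk}` at `b a^k`. -/
def uv2 (n h : ℕ) : DihedralGroup n → ℂ
  | .r _ => 0
  | .sr k => omega n ^ (h * k.val)

/-- The vector with entry `0` at `a^k` and `ω^{-hk}` at `b a^k`. -/
def uv3 (n h : ℕ) : DihedralGroup n → ℂ
  | .r _ => 0
  | .sr k => (omega n)⁻¹ ^ (h * k.val)

/-- The vector with entry `ω^{-hk}` at `a^k` and `0` at `b a^k`. -/
def uv4 (n h : ℕ) : DihedralGroup n → ℂ
  | .r k => (omega n)⁻¹ ^ (h * k.val)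
  | .sr _ => 0

/-- The vector with entry `conj(ℓ)·ω^{hk}` at `a^k` and `ω^{hk}` at `b a^k`. -/
def vv1 (n h : ℕ) (ℓ : ℂ) : DihedralGroup n → ℂ
  | .r k => (starRingEnd ℂ) ℓ * omega n ^ (h * k.val)
  | .sr k => omega n ^ (h * k.val)

/-- The vector with entry `ω^{-hk}` at `a^k` and `conj(ℓ)·ω^{-hk}` at `b a^k`. -/
def vv2 (n h : ℕ) (ℓ : ℂ) : DihedralGroup n → ℂ
  | .r k => (omega n)⁻¹ ^ (h * k.val)
  | .sr k => (starRingEnd ℂ) ℓ * (omega n)⁻¹ ^ (h * k.val)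

/-- The vector with entry `-ω^{hk}` at `a^k` and `ℓ·ω^{hk}` at `b a^k`. -/
def vv3 (n h : ℕ) (ℓ : ℂ) : DihedralGroup n → ℂ
  | .r k => -(omega n ^ (h * k.val))
  | .sr k => ℓ * omega n ^ (h * k.val)

/-- The vector with entry `ℓ·ω^{-hk}` at `a^k` and `-ω^{-hk}` at `b a^k`. -/
def vv4 (n h : ℕ) (ℓ : ℂ) : DihedralGroup n → ℂ
  | .r k => ℓ * (omega n)⁻¹ ^ (h * k.val)
  | .sr k => -((omega n)⁻¹ ^ (h * k.val))

/-! ### Fourier reformulation -/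

/-- The indicator function of `{k : a^k ∈ C}` on `ZMod n`. -/
def ind (n : ℕ) (C : Finset (DihedralGroup n)) (k : ZMod n) : ℂ :=
  if DihedralGroup.r k ∈ C then 1 else 0

lemma omega_pow_eq_stdAddChar (n : ℕ) [NeZero n] (m : ℕ) :
    omega n ^ m = ZMod.stdAddChar (m : ZMod n) := by
  have h := ZMod.stdAddChar_coe (N := n) (m : ℤ)
  rw [Int.cast_natCast] at h
  rw [h, omega, ← Complex.exp_nat_mul]
  congr 1
  push_cast
  ring

lemma sum_range_eq_sum_zmod (n : ℕ) [NeZero n] (g : ZMod n → ℂ) :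
    ∑ k ∈ Finset.range n, g (k : ZMod n) = ∑ k : ZMod n, g k := by
  refine Finset.sum_bij (fun k _ => (k : ZMod n)) (fun _ _ => Finset.mem_univ _) ?_ ?_
    (fun _ _ => rfl)
  · intro a ha b hb hab
    have h := congrArg ZMod.val hab
    rwa [ZMod.val_natCast_of_lt (Finset.mem_range.1 ha),
      ZMod.val_natCast_of_lt (Finset.mem_range.1 hb)] at h
  · intro b _
    exact ⟨b.val, Finset.mem_range.2 (ZMod.val_lt b), ZMod.natCast_zmod_val b⟩

lemma eta_eq_sum (n : ℕ) [NeZero n] (h : ℕ) (C : Finset (DihedralGroup n)) :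
    eta n h C = ∑ k : ZMod n, ZMod.stdAddChar ((h : ZMod n) * k) * ind n C k := by
  rw [eta, ← sum_range_eq_sum_zmod]
  refine Finset.sum_congr rfl fun k _ => ?_
  rw [omega_pow_eq_stdAddChar, ind]
  push_cast
  split_ifs <;> simp

/-- Reversing the frequency conjugates the character sum, since the indicator is real. -/
lemma sum_neg_eq_conj (n : ℕ) [NeZero n] (x : ZMod n) (C : Finset (DihedralGroup n)) :
    ∑ k : ZMod n, ZMod.stdAddChar (-x * k) * ind n C k =
      starRingEnd ℂ (∑ k : ZMod n, ZMod.stdAddChar (x * k) * ind n C k) := by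
  rw [map_sum]
  refine Finset.sum_congr rfl fun k _ => ?_
  have h : starRingEnd ℂ (ind n C k) = ind n C k := by
    unfold ind; split_ifs <;> simp
  rw [map_mul (starRingEnd ℂ), h, neg_mul, AddChar.map_neg_eq_conj]

/-- Translating the indicator by `2` multiplies its character sum at frequency `x` by
the value of the character at `-2x`. -/
lemma sum_shift (n : ℕ) [NeZero n] (x : ZMod n) (C : Finset (DihedralGroup n)) :
    ∑ k : ZMod n, ZMod.stdAddChar (x * k) * ind n C (k + 2) =
      ZMod.stdAddChar (-(2 * x)) * ∑ k : ZMod n, ZMod.stdAddChar (x * k) * ind n C k := by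
  rw [Finset.mul_sum, ← Equiv.sum_comp (Equiv.addRight (2 : ZMod n))
    (fun k => ZMod.stdAddChar (-(2 * x)) * (ZMod.stdAddChar (x * k) * ind n C k))]
  refine Finset.sum_congr rfl fun k _ => ?_
  rw [← mul_assoc, ← AddChar.map_add_eq_mul, Equiv.coe_addRight]
  congr 2
  ring

/-- Fourier form of the problem: `η_h(C)` vanishes for `1 ≤ h ≤ ⌊(n-1)/2⌋` exactly when the
exponent set of `C` is invariant under translation by `2`. -/
lemma eta_zero_iff (n : ℕ) [NeZero n] (C : Finset (DihedralGroup n)) :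
    (∀ h : ℕ, 1 ≤ h → h ≤ (n - 1) / 2 → eta n h C = 0) ↔
      ∀ k : ZMod n, DihedralGroup.r (k + 2) ∈ C ↔ DihedralGroup.r k ∈ C := by
  have key : (∀ k : ZMod n, DihedralGroup.r (k + 2) ∈ C ↔ DihedralGroup.r k ∈ C) ↔
      ∀ k : ZMod n, ind n C (k + 2) = ind n C k := by
    refine forall_congr' fun k => ?_
    unfold ind
    split_ifs <;> simp_all
  rw [key]
  constructor
  · intro H
    have all : ∀ x : ZMod n, 2 * x ≠ 0 →
        ∑ k : ZMod n, ZMod.stdAddChar (x * k) * ind n C k = 0 := by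
      intro x hx
      have hv := ZMod.val_lt x
      have h0 : x.val ≠ 0 := by
        intro h; apply hx; rw [(ZMod.val_eq_zero x).1 h, mul_zero]
      have h2 : 2 * x.val ≠ n := by
        intro h; apply hx
        have := congrArg (Nat.cast : ℕ → ZMod n) h
        simpa using this
      rcases le_or_gt x.val ((n - 1) / 2) with h | h
      · have := H x.val (by omega) h
        rwa [eta_eq_sum, ZMod.natCast_zmod_val] at this
      · -- The frequency `n - x` lies in the range covered by the hypothesis.
        have := H (n - x.val) (by omega) (by omega)
        rw [eta_eq_sum, Nat.cast_sub hv.le, ZMod.natCast_zmod_val, ZMod.natCast_self,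
          zero_sub, sum_neg_eq_conj] at this
        exact (map_eq_zero _).1 this
    have hd : ZMod.dft (fun k => ind n C (k + 2)) = ZMod.dft (ind n C) := by
      funext x
      have e : ∀ g : ZMod n → ℂ, ZMod.dft g x = ∑ k, ZMod.stdAddChar (-x * k) * g k := by
        intro g
        rw [ZMod.dft_apply]
        refine Finset.sum_congr rfl fun k _ => ?_
        rw [smul_eq_mul]
        congr 2
        ring
      rw [e, e, sum_shift]
      by_cases hx : 2 * -x = 0
      · rw [hx, neg_zero, AddChar.map_zero_eq_one, one_mul]
      · rw [all _ hx, mul_zero]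
    exact congrFun (ZMod.dft.injective hd)
  · intro H h h1 h2
    rw [eta_eq_sum]
    have hs := sum_shift n (h : ZMod n) C
    simp only [H] at hs
    by_contra hne
    have h3 := (mul_eq_right₀ hne).1 hs.symm
    rw [← AddChar.map_zero_eq_one (ZMod.stdAddChar (N := n))] at h3
    have h4 := ZMod.injective_stdAddChar h3
    rw [neg_eq_zero] at h4
    have h5 : ((2 * h : ℕ) : ZMod n) = 0 := by push_cast; exact h4
    rw [ZMod.natCast_eq_zero_iff] at h5
    have := Nat.le_of_dvd (by omega) h5
    omega

/-! ### Sets invariant under translation by two -/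

lemma mem_full (n : ℕ) [NeZero n] (k : ZMod n) :
    DihedralGroup.r k ∈ (Finset.range n).image fun k : ℕ => DihedralGroup.r (k : ZMod n) :=
  Finset.mem_image.2 ⟨k.val, Finset.mem_range.2 (ZMod.val_lt k), by simp⟩

lemma natCast_parity {n : ℕ} (hn : Even n) {a b : ℕ} (h : (a : ZMod n) = b) :
    a % 2 = b % 2 :=
  ((ZMod.natCast_eq_natCast_iff a b n).1 h).of_dvd hn.two_dvd

lemma mem_even {n : ℕ} [NeZero n] (hn : Even n) (m : ℕ) :
    DihedralGroup.r (m : ZMod n) ∈ ((Finset.range (n / 2)).image fun k : ℕ =>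
      DihedralGroup.r ((2 * k : ℕ) : ZMod n)) ↔ m % 2 = 0 := by
  simp only [Finset.mem_image, Finset.mem_range, DihedralGroup.r.injEq]
  constructor
  · rintro ⟨k, -, h⟩
    have := natCast_parity hn h
    omega
  · intro h
    have h1 : m % n % 2 = m % 2 := Nat.mod_mod_of_dvd m hn.two_dvd
    have h2 := Nat.mod_lt m (NeZero.pos n)
    have h3 := hn.two_dvd
    refine ⟨m % n / 2, by omega, ?_⟩
    rw [show 2 * (m % n / 2) = m % n by omega, ZMod.natCast_mod]

lemma mem_odd {n : ℕ} [NeZero n] (hn : Even n) (m : ℕ) :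
    DihedralGroup.r (m : ZMod n) ∈ ((Finset.range (n / 2)).image fun k : ℕ =>
      DihedralGroup.r ((2 * k + 1 : ℕ) : ZMod n)) ↔ m % 2 = 1 := by
  simp only [Finset.mem_image, Finset.mem_range, DihedralGroup.r.injEq]
  constructor
  · rintro ⟨k, -, h⟩
    have := natCast_parity hn h
    omega
  · intro h
    have h1 : m % n % 2 = m % 2 := Nat.mod_mod_of_dvd m hn.two_dvd
    have h2 := Nat.mod_lt m (NeZero.pos n)
    have h3 := hn.two_dvd
    refine ⟨m % n / 2, by omega, ?_⟩
    rw [show 2 * (m % n / 2) + 1 = m % n by omega, ZMod.natCast_mod]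

/-- Sets of rotations are equal as soon as they contain the same powers `a^m`, `m : ℕ`. -/
lemma ext_rot {n : ℕ} [NeZero n] {C D : Finset (DihedralGroup n)}
    (hC : ∀ x ∈ C, ∃ k : ZMod n, x = DihedralGroup.r k)
    (hD : ∀ x ∈ D, ∃ k : ZMod n, x = DihedralGroup.r k)
    (h : ∀ m : ℕ, DihedralGroup.r (m : ZMod n) ∈ C ↔ DihedralGroup.r (m : ZMod n) ∈ D) :
    C = D := by
  have h' : ∀ k : ZMod n, DihedralGroup.r k ∈ C ↔ DihedralGroup.r k ∈ D := fun k => by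
    simpa using h k.val
  ext x
  constructor
  · intro hx
    obtain ⟨k, rfl⟩ := hC x hx
    exact (h' k).1 hx
  · intro hx
    obtain ⟨k, rfl⟩ := hD x hx
    exact (h' k).2 hx

lemma image_rot {n : ℕ} (s : Finset ℕ) (g : ℕ → ZMod n) :
    ∀ x ∈ s.image (fun k => DihedralGroup.r (g k)), ∃ k : ZMod n, x = DihedralGroup.r k := by
  intro x hx
  obtain ⟨k, -, rfl⟩ := Finset.mem_image.1 hx
  exact ⟨_, rfl⟩

/-- Under invariance by translation by `2`, membership of `a^m` depends only on the parity
of `m`. -/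
lemma mem_parity {n : ℕ} {C : Finset (DihedralGroup n)}
    (H : ∀ k : ZMod n, DihedralGroup.r (k + 2) ∈ C ↔ DihedralGroup.r k ∈ C) (m : ℕ) :
    DihedralGroup.r (m : ZMod n) ∈ C ↔ DihedralGroup.r ((m % 2 : ℕ) : ZMod n) ∈ C := by
  induction m using Nat.strong_induction_on with
  | _ m ih =>
    rcases lt_or_ge m 2 with h | h
    · rw [Nat.mod_eq_of_lt h]
    · obtain ⟨j, rfl⟩ := Nat.exists_eq_add_of_le' h
      rw [Nat.add_mod_right, ← ih j (by omega), Nat.cast_add, Nat.cast_ofNat, H]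

theorem stmt_0 (n : ℕ) [NeZero n] (hn : 2 ≤ n)
    (C : Finset (DihedralGroup n))
    (hC : ∀ x ∈ C, ∃ k : ZMod n, x = DihedralGroup.r k) :
    (∀ h : ℕ, 1 ≤ h → h ≤ (n - 1) / 2 → eta n h C = 0) ↔
      ((Odd n →
          C = ∅ ∨ C = (Finset.range n).image fun k : ℕ => DihedralGroup.r (k : ZMod n)) ∧
       (Even n →
          C = ∅ ∨
          C = ((Finset.range n).image fun k : ℕ => DihedralGroup.r (k : ZMod n)) ∨
          C = ((Finset.range (n / 2)).image fun k : ℕ => DihedralGroup.r ((2 * k : ℕ) : ZMod n)) ∨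
          C = ((Finset.range (n / 2)).image fun k : ℕ =>
                DihedralGroup.r ((2 * k + 1 : ℕ) : ZMod n)))) := by
  rw [eta_zero_iff]
  constructor
  · intro H
    have hp := mem_parity H
    have empty : DihedralGroup.r ((0 : ℕ) : ZMod n) ∉ C →
        DihedralGroup.r ((1 : ℕ) : ZMod n) ∉ C → C = ∅ := by
      intro h0 h1
      refine ext_rot hC (by simp) fun m => ?_
      rw [hp]
      rcases Nat.mod_two_eq_zero_or_one m with h | h <;> rw [h]
      · exact iff_of_false h0 (by simp)
      · exact iff_of_false h1 (by simp)
    have full : DihedralGroup.r ((0 : ℕ) : ZMod n) ∈ C →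
        DihedralGroup.r ((1 : ℕ) : ZMod n) ∈ C →
        C = (Finset.range n).image fun k : ℕ => DihedralGroup.r (k : ZMod n) := by
      intro h0 h1
      refine ext_rot hC (image_rot _ _) fun m => iff_of_true ?_ (mem_full n _)
      rw [hp]
      rcases Nat.mod_two_eq_zero_or_one m with h | h <;> rw [h] <;> assumption
    constructor
    · intro ho
      -- As `n` is odd and `a^n = a^0`, the two parity classes agree.
      have h01 := hp n
      rw [Nat.odd_iff.1 ho, ZMod.natCast_self, ← Nat.cast_zero] at h01
      by_cases h0 : DihedralGroup.r ((0 : ℕ) : ZMod n) ∈ C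
      · exact Or.inr (full h0 (h01.1 h0))
      · exact Or.inl (empty h0 (mt h01.2 h0))
    · intro he
      by_cases h0 : DihedralGroup.r ((0 : ℕ) : ZMod n) ∈ C <;>
        by_cases h1 : DihedralGroup.r ((1 : ℕ) : ZMod n) ∈ C
      · exact Or.inr (Or.inl (full h0 h1))
      · refine Or.inr (Or.inr (Or.inl (ext_rot hC (image_rot _ _) fun m => ?_)))
        rw [mem_even he, hp]
        rcases Nat.mod_two_eq_zero_or_one m with h | h <;> rw [h]
        · exact iff_of_true h0 rfl
        · exact iff_of_false h1 (by simp)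
      · refine Or.inr (Or.inr (Or.inr (ext_rot hC (image_rot _ _) fun m => ?_)))
        rw [mem_odd he, hp]
        rcases Nat.mod_two_eq_zero_or_one m with h | h <;> rw [h]
        · exact iff_of_false h0 (by simp)
        · exact iff_of_true h1 rfl
      · exact Or.inl (empty h0 h1)
  · rintro ⟨ho, he⟩ k
    have hk : k + 2 = ((k.val + 2 : ℕ) : ZMod n) := by simp
    rcases Nat.even_or_odd n with h | h
    · rcases he h with rfl | rfl | rfl | rfl
      · simp
      · exact iff_of_true (mem_full n _) (mem_full n _)
      · rw [hk, mem_even h, ← ZMod.natCast_zmod_val k, mem_even h, ZMod.natCast_zmod_val]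
        omega
      · rw [hk, mem_odd h, ← ZMod.natCast_zmod_val k, mem_odd h, ZMod.natCast_zmod_val]
        omega
    · rcases ho h with rfl | rfl
      · simp
      · exact iff_of_true (mem_full n _) (mem_full n _)

end PaperPST
end
end

section
/- Let Cay(D_n, S) be a Cayley graph over the dihedral group D_n (n ≥ 2) and let h be an integer with 1 ≤ h ≤ ⌊(n−1)/2⌋ such that η_h(S_2) = 0. Then each of the following four vectors is an eigenvector of the adjacency matrix A with eigenvalue η_h(S_1): (1) the vector with entry ω^{hk} at vertex a^k (0 ≤ k ≤ n−1) and entry 0 at every vertex b a^k; (2) the vector with entry 0 at every a^k and entry ω^{hk} at b a^k; (3) the vector with entry 0 at every a^k and entry ω^{−hk} at b a^k; (4) the vector with entry ω^{−hk} at a^k and entry 0 at every b a^k. -/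
/-!
Since `k ↦ ω^{hk}` and `k ↦ ω^{-hk}` are characters of `ZMod n`, applying `A` to such a character
`f` supported on one coset of `⟨a⟩` gives, after translating the summation index, a multiple of
`f` on each coset (`adjC_onRot`, `adjC_onRefl`). On the original coset the factor is the sum of
`f^{±1}` over `S_1`, which is `η_h(S_1)` because `S_1 = S_1⁻¹`. On the other coset it is the sum of
`f^{±1}` over `S_2`, which is `η_h(S_2) = 0` or its complex conjugate. The vectors are nonzero
because `f 0 = 1`.
-/

open Polynomial Matrix

noncomputable section

namespace PaperPST

/-- The character `k ↦ ω^{hk}` of `ZMod n`, written with the representative `k.val`. -/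
def chi (n h : ℕ) (k : ZMod n) : ℂ := omega n ^ (h * k.val)

/-- A function on `ZMod n` placed on the rotations `a^k`, extended by zero. -/
def onRot {n : ℕ} (f : ZMod n → ℂ) : DihedralGroup n → ℂ
  | .r k => f k
  | .sr _ => 0

/-- A function on `ZMod n` placed on the reflections `b a^k`, extended by zero. -/
def onRefl {n : ℕ} (f : ZMod n → ℂ) : DihedralGroup n → ℂ
  | .r _ => 0
  | .sr k => f k

lemma omega_prim (n : ℕ) [NeZero n] : IsPrimitiveRoot (omega n) n :=
  Complex.isPrimitiveRoot_exp n (NeZero.ne n)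

lemma omega_pow_mod (n h m : ℕ) [NeZero n] : omega n ^ (h * (m % n)) = omega n ^ (h * m) := by
  rw [mul_comm h, mul_comm h, pow_mul, pow_mul, ← pow_mod_orderOf (omega n) m,
    ← (omega_prim n).eq_orderOf]

lemma chi_add (n h : ℕ) [NeZero n] (i j : ZMod n) : chi n h (i + j) = chi n h i * chi n h j := by
  simp only [chi]
  rw [ZMod.val_add, omega_pow_mod, mul_add, pow_add]

lemma chi_zero (n h : ℕ) : chi n h 0 = 1 := by simp [chi]

lemma omega_inv (n : ℕ) [NeZero n] : (omega n)⁻¹ = starRingEnd ℂ (omega n) :=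
  Complex.inv_eq_conj ((omega_prim n).norm'_eq_one (NeZero.ne n))

lemma omega_inv_pow (n h : ℕ) [NeZero n] (k : ZMod n) :
    (omega n)⁻¹ ^ (h * k.val) = chi n h (-k) := by
  have h1 : chi n h (-k) * chi n h k = 1 := by
    rw [← chi_add, neg_add_cancel, chi_zero]
  rw [eq_inv_of_mul_eq_one_left h1, inv_pow, chi]

lemma chi_neg (n h : ℕ) [NeZero n] (k : ZMod n) :
    chi n h (-k) = starRingEnd ℂ (chi n h k) := by
  rw [← omega_inv_pow, omega_inv, chi, map_pow]

lemma eta_eq (n h : ℕ) [NeZero n] (C : Finset (DihedralGroup n)) :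
    eta n h C = ∑ k : ZMod n, if DihedralGroup.r k ∈ C then chi n h k else 0 := by
  unfold eta
  refine Finset.sum_bij' (fun k _ => (k : ZMod n)) (fun k _ => k.val) ?_ ?_ ?_ ?_ ?_
  · simp
  · intro k _
    simpa using ZMod.val_lt k
  · intro k hk
    exact ZMod.val_cast_of_lt (Finset.mem_range.mp hk)
  · simp
  · intro k hk
    simp only [chi, ZMod.val_cast_of_lt (Finset.mem_range.mp hk)]

lemma mem_S1 (n : ℕ) (S : Finset (DihedralGroup n)) (k : ZMod n) :
    DihedralGroup.r k ∈ S1 n S ↔ DihedralGroup.r k ∈ S := by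
  rw [S1, Finset.mem_filter]
  exact and_iff_left rfl

lemma mem_S2 (n : ℕ) (S : Finset (DihedralGroup n)) (k : ZMod n) :
    DihedralGroup.r k ∈ S2 n S ↔ DihedralGroup.sr k ∈ S := by
  rw [S2, Finset.mem_filter, Finset.mem_image]
  constructor
  · rintro ⟨⟨s | s, hs, e⟩, -⟩
    · simp at e
    · simp at e
      exact e ▸ hs
  · intro hk
    exact ⟨⟨_, hk, by simp⟩, rfl⟩

lemma sum_dihedral (n : ℕ) [NeZero n] (g : DihedralGroup n → ℂ) :
    ∑ x, g x = ∑ k, g (.r k) + ∑ k, g (.sr k) := by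
  rw [← DihedralGroup.equivSum.symm.sum_comp, Fintype.sum_sum_type]
  rfl

/-- Translating the summation index turns a correlation with a character into a multiple of it. -/
lemma sum_add_char {n : ℕ} [NeZero n] {f : ZMod n → ℂ}
    (hf : ∀ i j, f (i + j) = f i * f j) (P : ZMod n → Prop) [DecidablePred P] (i : ZMod n) :
    ∑ j, (if P (j - i) then f j else 0) = (∑ k, if P k then f k else 0) * f i := by
  rw [← Fintype.sum_equiv (Equiv.addRight i) _ _ fun _ => rfl, Finset.sum_mul]
  refine Finset.sum_congr rfl fun k _ => ?_
  simp [hf]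

/-- The reflected form of `sum_add_char`. -/
lemma sum_sub_char {n : ℕ} [NeZero n] {f : ZMod n → ℂ}
    (hf : ∀ i j, f (i + j) = f i * f j) (P : ZMod n → Prop) [DecidablePred P] (i : ZMod n) :
    ∑ j, (if P (i - j) then f j else 0) = (∑ k, if P k then f (-k) else 0) * f i := by
  rw [← Fintype.sum_equiv (Equiv.subLeft i) _ _ fun _ => rfl, Finset.sum_mul]
  refine Finset.sum_congr rfl fun k _ => ?_
  simp [sub_eq_neg_add, hf]

lemma adjC_mul {n : ℕ} (S : Finset (DihedralGroup n)) {u v w : DihedralGroup n}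
    (e : u * v⁻¹ = w) (z : ℂ) : adjC n S u v * z = if w ∈ S then z else 0 := by
  subst e
  simp [adjC]

/-- For a multiplicative `f` placed on the rotations, `A` multiplies `f` by the sum of `f(-k)` over
the rotations of `S` and contributes to the reflections the same sum over the reflections of `S`,
assumed to vanish in `h2`. -/
lemma adjC_onRot {n : ℕ} [NeZero n] (S : Finset (DihedralGroup n)) {f : ZMod n → ℂ}
    (hf : ∀ i j, f (i + j) = f i * f j) {c : ℂ}
    (h1 : ∑ k, (if DihedralGroup.r k ∈ S then f (-k) else 0) = c)
    (h2 : ∑ k, (if DihedralGroup.sr k ∈ S then f (-k) else 0) = 0) :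
    adjC n S *ᵥ onRot f = c • onRot f := by
  funext x
  rw [Matrix.mulVec, dotProduct, sum_dihedral]
  rcases x with i | i
  · have key : ∀ j, adjC n S (.r i) (.r j) * f j = if DihedralGroup.r (i - j) ∈ S then f j else 0 :=
      fun j => adjC_mul S (by simp [sub_eq_add_neg]) _
    simp only [onRot, key, mul_zero, Finset.sum_const_zero, add_zero,
      Pi.smul_apply, smul_eq_mul]
    rw [sum_sub_char hf (fun k => DihedralGroup.r k ∈ S), h1]
  · have key : ∀ j, adjC n S (.sr i) (.r j) * f j = if DihedralGroup.sr (i - j) ∈ S then f j else 0 :=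
      fun j => adjC_mul S (by simp [sub_eq_add_neg]) _
    simp only [onRot, key, mul_zero, Finset.sum_const_zero, add_zero,
      Pi.smul_apply, smul_eq_mul]
    rw [sum_sub_char hf (fun k => DihedralGroup.sr k ∈ S), h2, zero_mul]

/-- The counterpart of `adjC_onRot` on the reflections, where `S` is summed against `f` itself. -/
lemma adjC_onRefl {n : ℕ} [NeZero n] (S : Finset (DihedralGroup n)) {f : ZMod n → ℂ}
    (hf : ∀ i j, f (i + j) = f i * f j) {c : ℂ}
    (h1 : ∑ k, (if DihedralGroup.r k ∈ S then f k else 0) = c)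
    (h2 : ∑ k, (if DihedralGroup.sr k ∈ S then f k else 0) = 0) :
    adjC n S *ᵥ onRefl f = c • onRefl f := by
  funext x
  rw [Matrix.mulVec, dotProduct, sum_dihedral]
  rcases x with i | i
  · have key : ∀ j, adjC n S (.r i) (.sr j) * f j = if DihedralGroup.sr (j - i) ∈ S then f j else 0 :=
      fun j => adjC_mul S (by simp [sub_eq_add_neg]) _
    simp only [onRefl, key, mul_zero, Finset.sum_const_zero, zero_add,
      Pi.smul_apply, smul_eq_mul]
    rw [sum_add_char hf (fun k => DihedralGroup.sr k ∈ S), h2, zero_mul]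
  · have key : ∀ j, adjC n S (.sr i) (.sr j) * f j = if DihedralGroup.r (j - i) ∈ S then f j else 0 :=
      fun j => adjC_mul S (by simp [sub_eq_add_neg]) _
    simp only [onRefl, key, mul_zero, Finset.sum_const_zero, zero_add,
      Pi.smul_apply, smul_eq_mul]
    rw [sum_add_char hf (fun k => DihedralGroup.r k ∈ S), h1]

lemma onRot_ne_zero {n : ℕ} {f : ZMod n → ℂ} (h0 : f 0 = 1) : onRot f ≠ 0 := fun e => by
  simpa [onRot, h0] using congrFun e (.r 0)

lemma onRefl_ne_zero {n : ℕ} {f : ZMod n → ℂ} (h0 : f 0 = 1) : onRefl f ≠ 0 := fun e => by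
  simpa [onRefl, h0] using congrFun e (.sr 0)

theorem stmt_2 (n : ℕ) [NeZero n] (hn : 2 ≤ n)
    (S : Finset (DihedralGroup n)) (hS1 : (1 : DihedralGroup n) ∉ S)
    (hSinv : ∀ s ∈ S, s⁻¹ ∈ S) (hSne : S.Nonempty)
    (h : ℕ) (hh1 : 1 ≤ h) (hh2 : h ≤ (n - 1) / 2) (hzero : eta n h (S2 n S) = 0) :
    (adjC n S *ᵥ uv1 n h = eta n h (S1 n S) • uv1 n h ∧ uv1 n h ≠ 0) ∧
    (adjC n S *ᵥ uv2 n h = eta n h (S1 n S) • uv2 n h ∧ uv2 n h ≠ 0) ∧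
    (adjC n S *ᵥ uv3 n h = eta n h (S1 n S) • uv3 n h ∧ uv3 n h ≠ 0) ∧
    (adjC n S *ᵥ uv4 n h = eta n h (S1 n S) • uv4 n h ∧ uv4 n h ≠ 0) := by
  have e1 : uv1 n h = onRot (chi n h) := by funext x; cases x <;> rfl
  have e2 : uv2 n h = onRefl (chi n h) := by funext x; cases x <;> rfl
  have e3 : uv3 n h = onRefl (fun k => chi n h (-k)) := by
    funext x
    cases x
    · rfl
    · exact omega_inv_pow n h _
  have e4 : uv4 n h = onRot (fun k => chi n h (-k)) := by
    funext x
    cases x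
    · exact omega_inv_pow n h _
    · rfl
  have hf := chi_add n h
  have hg : ∀ i j : ZMod n, chi n h (-(i + j)) = chi n h (-i) * chi n h (-j) := fun i j => by
    rw [neg_add, hf]
  have h0 := chi_zero n h
  have h0' : chi n h (-0) = 1 := by rw [neg_zero, h0]
  have p1 : ∑ k, (if DihedralGroup.r k ∈ S then chi n h k else 0) = eta n h (S1 n S) := by
    simp only [eta_eq, mem_S1]
  have p2 : ∑ k, (if DihedralGroup.sr k ∈ S then chi n h k else 0) = 0 := by
    simpa only [eta_eq, mem_S2] using hzero
  have hsymm : ∀ k : ZMod n, DihedralGroup.r (-k) ∈ S ↔ DihedralGroup.r k ∈ S := fun k =>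
    ⟨fun hk => by simpa using hSinv _ hk, fun hk => by simpa using hSinv _ hk⟩
  have q1 : ∑ k, (if DihedralGroup.r k ∈ S then chi n h (-k) else 0) = eta n h (S1 n S) := by
    rw [← p1]
    exact Fintype.sum_equiv (Equiv.neg (ZMod n)) _ _ fun k => by simp [hsymm]
  -- `S_2` need not be symmetric; the conjugate of the vanishing sum is used instead.
  have q2 : ∑ k, (if DihedralGroup.sr k ∈ S then chi n h (-k) else 0) = 0 := by
    have := congrArg (starRingEnd ℂ) p2
    rw [map_sum, map_zero] at this
    refine Eq.trans ?_ this
    refine Finset.sum_congr rfl fun k _ => ?_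
    split_ifs
    · exact chi_neg n h k
    · simp
  rw [e1, e2, e3, e4]
  exact ⟨⟨adjC_onRot S hf q1 q2, onRot_ne_zero h0⟩,
    ⟨adjC_onRefl S hf p1 p2, onRefl_ne_zero h0⟩,
    ⟨adjC_onRefl S hg q1 q2, onRefl_ne_zero h0'⟩,
    ⟨adjC_onRot S hg (by simpa using p1) (by simpa using p2), onRot_ne_zero h0'⟩⟩

end PaperPST
end
end

section
/- Let G = Cay(Γ, S) be a Cayley graph over a finite group Γ. Then there exist distinct vertices u, v of G such that PST occurs between u and v at time τ if and only if T_τ(P) is the permutation matrix of a fixed-point-free involution of Γ, i.e., there exists a bijection σ : Γ → Γ with σ ∘ σ = id and σ(g) ≠ g for all g ∈ Γ, such that T_τ(P)_{x,y} = 1 if x = σ(y) and T_τ(P)_{x,y} = 0 otherwise. -/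
/-!
The matrix `M = T_τ(P)` is a polynomial in `P`, so it inherits two properties of `P`: it is
symmetric (`chebG_isSymm`) and invariant under right translation (`chebG_mul_right`).
Right invariance means that a single column determines `M`: if `M e_u = e_v`, then
`M x y = M (x y⁻¹ u) u`, which is `1` exactly when `x = (v u⁻¹) y` and `0` otherwise. Hence `M` is
the permutation matrix of left multiplication by `a = v u⁻¹`, which has no fixed point as `u ≠ v`,
and symmetry of `M` forces `a² = 1`. The converse is read off from any column of `M`.
-/

open Polynomial Matrix

noncomputable section

namespace PaperPST

/-- Right translations are automorphisms of `Cay(Γ, S)`, so `T_τ(P)` is invariant under them. -/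
lemma chebG_mul_right (Γ : Type*) [Group Γ] [Fintype Γ] [DecidableEq Γ]
    (S : Finset Γ) (τ : ℕ) (x y g : Γ) :
    chebG Γ S τ (x * g) (y * g) = chebG Γ S τ x y := by
  have hP : Matrix.reindexAlgEquiv ℂ ℂ (Equiv.mulRight g⁻¹) (discG Γ S) = discG Γ S := by
    ext a b
    simp [discG, adjG]
  have h := Polynomial.aeval_algHom_apply
    (Matrix.reindexAlgEquiv ℂ ℂ (Equiv.mulRight g⁻¹)).toAlgHom (discG Γ S)
    (Polynomial.Chebyshev.T ℂ τ)
  have h2 : chebG Γ S τ = Matrix.reindexAlgEquiv ℂ ℂ (Equiv.mulRight g⁻¹) (chebG Γ S τ) := by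
    simpa [hP, chebG] using h
  have h3 := congrFun (congrFun h2 x) y
  rw [h3]
  simp

lemma chebG_isSymm (Γ : Type*) [Group Γ] [Fintype Γ] [DecidableEq Γ]
    (S : Finset Γ) (hSinv : ∀ s ∈ S, s⁻¹ ∈ S) (τ : ℕ) : (chebG Γ S τ).IsSymm := by
  have hP : (discG Γ S).IsSymm := by
    ext a b
    have h : b * a⁻¹ ∈ S ↔ a * b⁻¹ ∈ S :=
      ⟨fun h => by simpa using hSinv _ h, fun h => by simpa using hSinv _ h⟩
    simp [discG, adjG, h]
  unfold chebG
  rw [Polynomial.aeval_eq_sum_range, Matrix.IsSymm, Matrix.transpose_sum]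
  refine Finset.sum_congr rfl fun i _ => ?_
  rw [Matrix.transpose_smul, Matrix.transpose_pow, hP.eq]

theorem stmt_5 (Γ : Type*) [Group Γ] [Fintype Γ] [DecidableEq Γ]
    (S : Finset Γ) (hS1 : (1 : Γ) ∉ S) (hSinv : ∀ s ∈ S, s⁻¹ ∈ S) (hSne : S.Nonempty)
    (τ : ℕ) (hτ : 1 ≤ τ) :
    (∃ u v : Γ, u ≠ v ∧ PSTG Γ S τ u v) ↔
      ∃ σ : Γ → Γ, Function.Bijective σ ∧ (∀ g : Γ, σ (σ g) = g) ∧ (∀ g : Γ, σ g ≠ g) ∧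
        ∀ x y : Γ, chebG Γ S τ x y = if x = σ y then 1 else 0 := by
  constructor
  · rintro ⟨u, v, huv, h⟩
    have hM : ∀ x y : Γ, chebG Γ S τ x y = if x = v * u⁻¹ * y then 1 else 0 := by
      intro x y
      have h1 := congrFun h (x * (y⁻¹ * u))
      rw [Matrix.mulVec_single_one, Matrix.col_apply, Pi.single_apply] at h1
      have h2 := chebG_mul_right Γ S τ x y (y⁻¹ * u)
      rw [mul_inv_cancel_left] at h2
      rw [← h2, h1]
      have h3 : x * (y⁻¹ * u) = v ↔ x = v * u⁻¹ * y := by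
        rw [← eq_mul_inv_iff_mul_eq]
        simp [mul_assoc]
      simp only [h3]
    have hinv : ∀ g : Γ, v * u⁻¹ * (v * u⁻¹ * g) = g := by
      intro g
      have h1 := (chebG_isSymm Γ S hSinv τ).apply (v * u⁻¹ * g) g
      by_contra hne
      rw [hM, hM, if_neg (Ne.symm hne), if_pos rfl] at h1
      exact zero_ne_one h1
    refine ⟨fun y => v * u⁻¹ * y, Function.Involutive.bijective hinv, hinv, fun g hg => ?_, hM⟩
    rw [mul_eq_right, mul_inv_eq_one] at hg
    exact huv hg.symm
  · rintro ⟨σ, -, -, hfix, hM⟩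
    refine ⟨1, σ 1, (hfix 1).symm, ?_⟩
    unfold PSTG
    ext x
    rw [Matrix.mulVec_single_one, Matrix.col_apply, Pi.single_apply, hM]

end PaperPST
end
end

section
/- Let G = Cay(Γ, S) be a normal Cayley graph over a finite group Γ, i.e., g s g^{-1} ∈ S for all g ∈ Γ and s ∈ S. If PST occurs between some pair of distinct vertices of G at time τ, then there exists an element z of the center Z(Γ) with z ≠ 1 and z² = 1 such that T_τ(P) = R_z, where R_z is the permutation matrix of right multiplication by z, i.e., (R_z)_{x,y} = 1 if x = yz and (R_z)_{x,y} = 0 otherwise. -/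
/-!
Both left and right multiplication are automorphisms of a normal Cayley graph, and its adjacency
matrix is symmetric. These three symmetries pass from `P` to every polynomial in `P`
(`cheb_perm`, `cheb_symm`), in particular to `M = T_τ(P)`. Perfect state transfer says that column
`u` of `M` is `e_v`. Translating on the left, `M x y = 1` iff `x = y * (u⁻¹ * v)`; translating on
the right, `M x y = 1` iff `x = (v * u⁻¹) * y`. Comparing the two shows that `z = u⁻¹ * v` is
central, and symmetry of `M` gives `z ^ 2 = 1`.
-/

open Polynomial Matrix

noncomputable section

namespace PaperPST

/-- A permutation of the vertices preserving adjacency preserves `T_τ(P)`, since reindexing is an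
algebra automorphism of the matrix algebra. -/
theorem cheb_perm {Γ : Type*} [Group Γ] [Fintype Γ] [DecidableEq Γ] (S : Finset Γ) (τ : ℕ)
    (e : Γ ≃ Γ) (he : ∀ x y, e x * (e y)⁻¹ ∈ S ↔ x * y⁻¹ ∈ S) (x y : Γ) :
    chebG Γ S τ (e x) (e y) = chebG Γ S τ x y := by
  have h1 : Matrix.reindexAlgEquiv ℂ ℂ e.symm (discG Γ S) = discG Γ S := by
    ext a b
    simp [discG, adjG, he]
  have h2 : Matrix.reindexAlgEquiv ℂ ℂ e.symm (chebG Γ S τ) = chebG Γ S τ := by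
    have h := Polynomial.aeval_algHom_apply
      (Matrix.reindexAlgEquiv ℂ ℂ e.symm) (discG Γ S) (Polynomial.Chebyshev.T ℂ τ)
    rw [h1] at h
    exact h.symm
  have h3 := congrFun (congrFun h2 x) y
  simpa using h3

theorem cheb_symm {Γ : Type*} [Group Γ] [Fintype Γ] [DecidableEq Γ] (S : Finset Γ) (τ : ℕ)
    (hSinv : ∀ s ∈ S, s⁻¹ ∈ S) (x y : Γ) :
    chebG Γ S τ x y = chebG Γ S τ y x := by
  have hiff : ∀ a b : Γ, b * a⁻¹ ∈ S ↔ a * b⁻¹ ∈ S := fun a b =>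
    ⟨fun h => by simpa using hSinv _ h, fun h => by simpa using hSinv _ h⟩
  have h1 : (discG Γ S)ᵀ = discG Γ S := by
    ext a b
    simp [discG, adjG, hiff a b]
  have h2 : (chebG Γ S τ)ᵀ = chebG Γ S τ := by
    simp only [chebG, Polynomial.aeval_eq_sum_range, Matrix.transpose_sum, Matrix.transpose_smul,
      Matrix.transpose_pow, h1]
  exact congrFun (congrFun h2 y) x

theorem stmt_6 (Γ : Type*) [Group Γ] [Fintype Γ] [DecidableEq Γ]
    (S : Finset Γ) (hS1 : (1 : Γ) ∉ S) (hSinv : ∀ s ∈ S, s⁻¹ ∈ S) (hSne : S.Nonempty)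
    (hnorm : ∀ g : Γ, ∀ s ∈ S, g * s * g⁻¹ ∈ S)
    (τ : ℕ) (hτ : 1 ≤ τ) (u v : Γ) (huv : u ≠ v) (hpst : PSTG Γ S τ u v) :
    ∃ z : Γ, z ∈ Subgroup.center Γ ∧ z ≠ 1 ∧ z ^ 2 = 1 ∧
      ∀ x y : Γ, chebG Γ S τ x y = if x = y * z then 1 else 0 := by
  have hcol : ∀ x, chebG Γ S τ x u = if x = v then 1 else 0 := fun x => by
    have h := congrFun hpst x
    simpa [Pi.single_apply] using h
  have hL : ∀ g x y, chebG Γ S τ (g * x) (g * y) = chebG Γ S τ x y := fun g =>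
    cheb_perm S τ (Equiv.mulLeft g) fun x y => by
      constructor
      · intro h
        have := hnorm g⁻¹ _ h
        simpa [mul_assoc] using this
      · intro h
        have := hnorm g _ h
        simpa [mul_assoc] using this
  have hR : ∀ g x y, chebG Γ S τ (x * g) (y * g) = chebG Γ S τ x y := fun g =>
    cheb_perm S τ (Equiv.mulRight g) fun x y => by simp
  have hML : ∀ x y, chebG Γ S τ x y = if x = y * (u⁻¹ * v) then 1 else 0 := fun x y => by
    have h := hL (u * y⁻¹) x y
    rw [inv_mul_cancel_right, hcol] at h
    rw [← h]
    congr 1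
    rw [mul_assoc, ← eq_inv_mul_iff_mul_eq, inv_mul_eq_iff_eq_mul]
  have hMR : ∀ x y, chebG Γ S τ x y = if x = v * u⁻¹ * y then 1 else 0 := fun x y => by
    have h := hR (y⁻¹ * u) x y
    rw [mul_inv_cancel_left, hcol] at h
    rw [← h]
    congr 1
    rw [← mul_assoc, ← eq_mul_inv_iff_mul_eq, mul_inv_eq_iff_eq_mul]
  have hc : ∀ y, y * (u⁻¹ * v) = v * u⁻¹ * y := fun y => by
    have h := hMR (y * (u⁻¹ * v)) y
    rw [hML, if_pos rfl] at h
    by_contra hne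
    simp [hne] at h
  have h1 : u⁻¹ * v = v * u⁻¹ := by simpa using hc 1
  refine ⟨u⁻¹ * v, Subgroup.mem_center_iff.mpr fun g => by rw [hc g, h1], ?_, ?_, hML⟩
  · intro h
    exact huv (inv_mul_eq_one.mp h)
  · have h : chebG Γ S τ u v = 1 := by rw [cheb_symm S τ hSinv, hcol, if_pos rfl]
    rw [hML] at h
    have h2 : u = v * (u⁻¹ * v) := by
      by_contra hne
      simp [hne] at h
    rw [pow_two, mul_assoc, ← h2, inv_mul_cancel]

end PaperPST
end
end

section
/- Let n ≥ 3 be odd and let Cay(D_n, S) be a normal Cayley graph over the dihedral group D_n. Then Cay(D_n, S) exhibits no perfect state transfer: for every positive integer τ and all distinct vertices u and v, T_τ(P) e_u ≠ e_v. -/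
/-!
`T_τ(P)` is a polynomial in `P`, so it commutes with every automorphism of the Cayley graph.
When `S` is closed under conjugation, the maps `w ↦ h w k` are automorphisms for all `h` and `k`.
Taking `k = u⁻¹ h⁻¹ u` gives one that fixes `u`
(`chebP_submatrix_twist`). If `T_τ(P) e_u = e_v`, this automorphism must then fix `v` as well, which
says precisely that `h` commutes with `v u⁻¹`. As `h` is arbitrary, `v u⁻¹` lies in the centre of
`D_n`, which is trivial for odd `n ≥ 3`; hence `u = v`.
-/

open Polynomial Matrix

noncomputable section

namespace PaperPST

/-- The permutation `w ↦ h w u⁻¹ h⁻¹ u` of `D_n`: conjugation by `h`, transported by right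
translation so that it fixes `u` instead of `1`. -/
def twist (n : ℕ) (h u : DihedralGroup n) : Equiv.Perm (DihedralGroup n) :=
  (Equiv.mulLeft h).trans (Equiv.mulRight (u⁻¹ * h⁻¹ * u))

theorem twist_apply (n : ℕ) (h u w : DihedralGroup n) :
    twist n h u w = h * w * (u⁻¹ * h⁻¹ * u) := rfl

theorem twist_self (n : ℕ) (h u : DihedralGroup n) : twist n h u u = u := by
  rw [twist_apply]; group

theorem conj_mem_iff {n : ℕ} {S : Finset (DihedralGroup n)} (hnormal : IsNormalCay n S)
    (g s : DihedralGroup n) : g * s * g⁻¹ ∈ S ↔ s ∈ S := by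
  refine ⟨fun hs => ?_, hnormal g s⟩
  have := hnormal g⁻¹ _ hs
  rwa [show g⁻¹ * (g * s * g⁻¹) * g⁻¹⁻¹ = s by group] at this

theorem disc_submatrix_twist {n : ℕ} {S : Finset (DihedralGroup n)}
    (hnormal : IsNormalCay n S) (h u : DihedralGroup n) :
    (disc n S).submatrix (twist n h u) (twist n h u) = disc n S := by
  ext x y
  have hxy : twist n h u x * (twist n h u y)⁻¹ = h * (x * y⁻¹) * h⁻¹ := by
    simp only [twist_apply]; group
  simp only [disc, adjC, submatrix_apply, Matrix.smul_apply, of_apply, hxy,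
    conj_mem_iff hnormal]

/-- Simultaneous reindexing of rows and columns is an algebra automorphism, so the invariance of
`P` passes to the polynomial `T_τ(P)`. -/
theorem chebP_submatrix_twist {n : ℕ} [NeZero n] {S : Finset (DihedralGroup n)}
    (hnormal : IsNormalCay n S) (τ : ℕ) (h u : DihedralGroup n) :
    (chebP n S τ).submatrix (twist n h u) (twist n h u) = chebP n S τ := by
  have key := Polynomial.aeval_algHom_apply
    (reindexAlgEquiv ℂ ℂ (twist n h u).symm).toAlgHom (disc n S) (Polynomial.Chebyshev.T ℂ τ)
  have hP : (reindexAlgEquiv ℂ ℂ (twist n h u).symm).toAlgHom (disc n S) = disc n S :=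
    disc_submatrix_twist hnormal h u
  rw [hP] at key
  exact key.symm

theorem stmt_13 (n : ℕ) [NeZero n] (hn : 3 ≤ n) (hodd : Odd n)
    (S : Finset (DihedralGroup n)) (hS1 : (1 : DihedralGroup n) ∉ S)
    (hSinv : ∀ s ∈ S, s⁻¹ ∈ S) (hSne : S.Nonempty)
    (hnormal : IsNormalCay n S) :
    ∀ τ : ℕ, 1 ≤ τ → ∀ u v : DihedralGroup n, u ≠ v → ¬ PST n S τ u v := by
  intro τ _ u v huv hpst
  have hcol : ∀ w, chebP n S τ w u = (Pi.single v 1 : DihedralGroup n → ℂ) w := by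
    intro w
    rw [← show chebP n S τ *ᵥ Pi.single u 1 = Pi.single v 1 from hpst]
    simp
  have hfix : ∀ h, twist n h u v = v := by
    intro h
    have hinv := congrFun (congrFun (chebP_submatrix_twist hnormal τ h u) v) u
    rw [submatrix_apply, twist_self, hcol, hcol, Pi.single_eq_same] at hinv
    by_contra hne
    rw [Pi.single_eq_of_ne hne] at hinv
    exact zero_ne_one hinv
  have hcenter : v * u⁻¹ ∈ Subgroup.center (DihedralGroup n) := by
    rw [Subgroup.mem_center_iff]
    intro h
    have hv := hfix h
    rw [twist_apply] at hv
    calc h * (v * u⁻¹) = h * v * (u⁻¹ * h⁻¹ * u) * u⁻¹ * h := by group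
      _ = v * u⁻¹ * h := by rw [hv]
  rw [DihedralGroup.center_eq_bot_of_odd_ne_one hodd (by omega), Subgroup.mem_bot] at hcenter
  exact huv (mul_inv_eq_one.mp hcenter).symm

end PaperPST
end
end

section
/- Let Cay(D_n, S) be a Cayley graph over the dihedral group D_n (n ≥ 2). Then it is impossible that both of the following hold: (a) there exist a positive integer τ₁ and distinct vertex labels u, v with (u,v) ∈ (G_0 × G_0) ∪ (G_1 × G_1) such that PST occurs between u and v at time τ₁; and (b) there exist a positive integer τ₂ and vertex labels x, y with (x,y) ∈ (G_0 × G_1) ∪ (G_1 × G_0) such that PST occurs between x and y at time τ₂. Consequently, if Cay(D_n, S) exhibits PST, then the set of all pairs of vertices between which PST occurs is a subset of (G_0 × G_0) ∪ (G_1 × G_1) or a subset of (G_0 × G_1) ∪ (G_1 × G_0). -/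
/-!
Write `P` for the discriminant matrix and `t k = T_k(P)`, `k ∈ ℤ`. Since `P` commutes with right
translations and is Hermitian, PST from `u` to `v` at time `τ` forces `t τ` to be the permutation
matrix of left multiplication by `g = v u⁻¹` (`PST.apply`), and `g² = 1`, so `t (2τ) = 1`
(`PST.cheb_two_mul`).

The identity `(T_{m+p} - T_m)² = (T_{2m+p} - 1)(T_p - 1)` (`cheb_sub_sq`), together with the fact
that a Hermitian matrix of square zero vanishes, shows that `t p = 1` makes `p` a period of `t`
(`cheb_periodic`). The periods form a subgroup `H` of `ℤ`. If PST between distinct vertices occurs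
at times `τ₁` and `τ₂`, then `2τ₁, 2τ₂ ∈ H` while `τ₁, τ₂ ∉ H`; as `H` is cyclic, this gives
`τ₁ - τ₂ ∈ H`, hence `t τ₁ = t τ₂`. The two times therefore have the same element `g`
(`PST.translation_unique`), which cannot be both a rotation and a reflection.
-/

open Polynomial Matrix

noncomputable section

namespace PaperPST

/-- Squared form of the difference formula `cos (m + p)θ - cos mθ = -2 sin (m + p/2)θ sin (p/2)θ`. -/
theorem cheb_sub_sq (m p : ℤ) :
    (Chebyshev.T ℂ (m + p) - Chebyshev.T ℂ m) ^ 2 =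
      (Chebyshev.T ℂ (2 * m + p) - 1) * (Chebyshev.T ℂ p - 1) := by
  have h1 := Chebyshev.T_mul_T ℂ (m + p) (m + p)
  have h2 := Chebyshev.T_mul_T ℂ m m
  have h3 := Chebyshev.T_mul_T ℂ (m + p) m
  have h4 := Chebyshev.T_mul_T ℂ (2 * m + p) p
  rw [show m + p + (m + p) = 2 * m + 2 * p by ring, sub_self, Chebyshev.T_zero] at h1
  rw [show m + m = 2 * m by ring, sub_self, Chebyshev.T_zero] at h2
  rw [show m + p + m = 2 * m + p by ring, show m + p - m = p by ring] at h3
  rw [show 2 * m + p + p = 2 * m + 2 * p by ring, show 2 * m + p - p = 2 * m by ring] at h4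
  have h : (2 : ℂ[X]) ≠ 0 := two_ne_zero
  apply mul_left_cancel₀ h
  linear_combination h1 + h2 - 2 * h3 - h4

theorem isHermitian_cheb {V : Type*} [Fintype V] [DecidableEq V] {P : Matrix V V ℂ}
    (hP : P.IsHermitian) (k : ℤ) : (aeval P (Chebyshev.T ℂ k)).IsHermitian := by
  induction k using Chebyshev.induct' with
  | zero => simp
  | one => simpa using hP
  | add_two n h1 h0 =>
    rw [Chebyshev.T_add_two]
    simp only [map_sub, map_mul, aeval_X, map_ofNat]
    refine Matrix.IsHermitian.sub ?_ h0
    have hc : Commute P (aeval P (Chebyshev.T ℂ (n + 1 : ℤ))) := by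
      have := (Commute.all (X : ℂ[X]) (Chebyshev.T ℂ (n + 1 : ℤ))).map (aeval P)
      simpa using this
    have h2 := Matrix.isHermitian_iff_isSelfAdjoint.mpr
      ((IsSelfAdjoint.commute_iff hP.isSelfAdjoint h1.isSelfAdjoint).mp hc)
    rw [mul_assoc, two_mul]
    exact h2.add h2
  | neg n h => rwa [Chebyshev.T_neg]

open scoped ComplexOrder in
theorem cheb_periodic {V : Type*} [Fintype V] [DecidableEq V] {P : Matrix V V ℂ}
    (hP : P.IsHermitian) {p : ℤ} (hp : aeval P (Chebyshev.T ℂ p) = 1) (m : ℤ) :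
    aeval P (Chebyshev.T ℂ (m + p)) = aeval P (Chebyshev.T ℂ m) := by
  have h := congrArg (aeval P) (cheb_sub_sq m p)
  simp only [map_pow, map_sub, map_mul, map_one, hp, sub_self, mul_zero] at h
  have hH := (isHermitian_cheb hP (m + p)).sub (isHermitian_cheb hP m)
  rw [pow_two] at h
  nth_rewrite 1 [← hH.eq] at h
  exact sub_eq_zero.mp (Matrix.conjTranspose_mul_self_eq_zero.mp h)

/-- As `H = dℤ` is cyclic, the integers outside `H` whose double lies in `H` form at most one coset
of `H`, namely that of `d / 2`. -/
theorem sub_mem_of_two_mul_mem (H : AddSubgroup ℤ) {a b : ℤ} (ha : a ∉ H) (hb : b ∉ H)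
    (ha2 : 2 * a ∈ H) (hb2 : 2 * b ∈ H) : a - b ∈ H := by
  obtain ⟨d, rfl⟩ := Int.subgroup_cyclic H
  simp only [AddSubgroup.mem_closure_singleton, smul_eq_mul] at *
  obtain ⟨k, hk⟩ := ha2
  obtain ⟨l, hl⟩ := hb2
  have hko : Odd k := by
    by_contra hc
    obtain ⟨c, rfl⟩ := Int.not_odd_iff_even.mp hc
    exact ha ⟨c, by linarith⟩
  have hlo : Odd l := by
    by_contra hc
    obtain ⟨c, rfl⟩ := Int.not_odd_iff_even.mp hc
    exact hb ⟨c, by linarith⟩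
  obtain ⟨c, hc⟩ := hko.sub_odd hlo
  refine ⟨c, ?_⟩
  have : (k - l) * d = (c + c) * d := by rw [hc]
  linarith

theorem cheb_eq_of_involutive {V : Type*} [Fintype V] [DecidableEq V] {P : Matrix V V ℂ}
    (hP : P.IsHermitian) {a b : ℤ}
    (ha : aeval P (Chebyshev.T ℂ a) ≠ 1) (hb : aeval P (Chebyshev.T ℂ b) ≠ 1)
    (ha2 : aeval P (Chebyshev.T ℂ (2 * a)) = 1) (hb2 : aeval P (Chebyshev.T ℂ (2 * b)) = 1) :
    aeval P (Chebyshev.T ℂ a) = aeval P (Chebyshev.T ℂ b) := by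
  let H : AddSubgroup ℤ :=
    { carrier := {p | aeval P (Chebyshev.T ℂ p) = 1}
      zero_mem' := by simp
      add_mem' := fun {x y} hx hy => (cheb_periodic hP hy x).trans hx
      neg_mem' := fun {x} hx => by
        simpa only [Set.mem_ofPred_eq, Chebyshev.T_neg] using hx }
  have h : a - b ∈ H := sub_mem_of_two_mul_mem H ha hb ha2 hb2
  have := cheb_periodic hP (p := a - b) h b
  rwa [add_sub_cancel] at this

theorem isHermitian_disc {n : ℕ} [NeZero n] {S : Finset (DihedralGroup n)}
    (hSinv : ∀ s ∈ S, s⁻¹ ∈ S) : (disc n S).IsHermitian := by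
  ext i j
  have h : j * i⁻¹ ∈ S ↔ i * j⁻¹ ∈ S :=
    ⟨fun h => by simpa using hSinv _ h, fun h => by simpa using hSinv _ h⟩
  by_cases hh : i * j⁻¹ ∈ S <;> simp [disc, adjC, h, hh]

/-- Right translations are automorphisms of the Cayley graph, so they preserve `T_τ(P)`. -/
theorem chebP_mul_right {n : ℕ} [NeZero n] (S : Finset (DihedralGroup n)) (τ : ℕ)
    (x y g : DihedralGroup n) : chebP n S τ (x * g) (y * g) = chebP n S τ x y := by
  have h := aeval_algHom_apply (Matrix.reindexAlgEquiv ℂ ℂ (Equiv.mulRight g⁻¹)) (disc n S)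
    (Chebyshev.T ℂ τ)
  have hd : Matrix.reindexAlgEquiv ℂ ℂ (Equiv.mulRight g⁻¹) (disc n S) = disc n S := by
    ext i j
    simp [disc, adjC]
  rw [hd] at h
  have h2 := congrFun (congrFun h x) y
  simpa [chebP] using h2.symm

/-- PST from `u` to `v` makes `T_τ(P)` the permutation matrix of left multiplication by
`v * u⁻¹`. -/
theorem PST.apply {n : ℕ} [NeZero n] {S : Finset (DihedralGroup n)} {τ : ℕ}
    {u v : DihedralGroup n} (h : PST n S τ u v) (x y : DihedralGroup n) :
    chebP n S τ x y = if x = v * u⁻¹ * y then 1 else 0 := by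
  have h1 := congrFun h (x * (y⁻¹ * u))
  rw [Matrix.mulVec_single_one, Matrix.col_apply] at h1
  have h2 := chebP_mul_right S τ x y (y⁻¹ * u)
  rw [mul_inv_cancel_left] at h2
  rw [← h2, h1, Pi.single_apply]
  congr 1
  rw [eq_iff_iff, ← mul_assoc, ← eq_mul_inv_iff_mul_eq, ← eq_mul_inv_iff_mul_eq, inv_inv]

theorem PST.involutive {n : ℕ} [NeZero n] {S : Finset (DihedralGroup n)}
    (hSinv : ∀ s ∈ S, s⁻¹ ∈ S) {τ : ℕ} {u v : DihedralGroup n} (h : PST n S τ u v) :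
    v * u⁻¹ * (v * u⁻¹) = 1 := by
  have h1 := (isHermitian_cheb (isHermitian_disc hSinv) τ).apply 1 (v * u⁻¹)
  change star (chebP n S τ (v * u⁻¹) 1) = chebP n S τ 1 (v * u⁻¹) at h1
  rw [h.apply, h.apply] at h1
  by_contra hc
  simp [Ne.symm hc] at h1

theorem PST.cheb_two_mul {n : ℕ} [NeZero n] {S : Finset (DihedralGroup n)}
    (hSinv : ∀ s ∈ S, s⁻¹ ∈ S) {τ : ℕ} {u v : DihedralGroup n} (h : PST n S τ u v) :
    aeval (disc n S) (Chebyshev.T ℂ (2 * τ)) = 1 := by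
  have hsq : chebP n S τ * chebP n S τ = 1 := by
    ext x y
    have : ∀ w, v * u⁻¹ * (v * u⁻¹ * w) = w := fun w => by
      rw [← mul_assoc, h.involutive hSinv, one_mul]
    simp [Matrix.mul_apply, h.apply, Matrix.one_apply, this]
  have h1 := congrArg (aeval (disc n S)) (Chebyshev.T_mul_T ℂ τ τ)
  rw [sub_self, Chebyshev.T_zero, ← two_mul, mul_assoc] at h1
  simp only [map_mul, map_add, map_one, map_ofNat] at h1
  change 2 * (chebP n S τ * chebP n S τ) = _ at h1
  rw [hsq, mul_one, eq_comm] at h1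
  rw [← eq_sub_iff_add_eq] at h1
  rw [h1, ← one_add_one_eq_two, add_sub_cancel_right]

theorem PST.cheb_ne_one {n : ℕ} [NeZero n] {S : Finset (DihedralGroup n)} {τ : ℕ}
    {u v : DihedralGroup n} (h : PST n S τ u v) (huv : u ≠ v) : chebP n S τ ≠ 1 := by
  intro hc
  have h1 := h.apply u u
  rw [hc] at h1
  simp [huv] at h1

/-- All occurrences of PST between distinct vertices, at whatever times, are given by left
multiplication by one and the same group element. -/
theorem PST.translation_unique {n : ℕ} [NeZero n] {S : Finset (DihedralGroup n)}
    (hSinv : ∀ s ∈ S, s⁻¹ ∈ S) {τ₁ τ₂ : ℕ} {u v x y : DihedralGroup n}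
    (h₁ : PST n S τ₁ u v) (huv : u ≠ v) (h₂ : PST n S τ₂ x y) (hxy : x ≠ y) :
    v * u⁻¹ = y * x⁻¹ := by
  have h : chebP n S τ₁ = chebP n S τ₂ :=
    cheb_eq_of_involutive (isHermitian_disc hSinv) (h₁.cheb_ne_one huv) (h₂.cheb_ne_one hxy)
      (h₁.cheb_two_mul hSinv) (h₂.cheb_two_mul hSinv)
  have h3 := congrFun (congrFun h (v * u⁻¹)) 1
  rw [h₁.apply, h₂.apply] at h3
  simpa using h3

theorem isRot_lab (n u : ℕ) : isRot (lab n u) = decide (u < n) := by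
  unfold lab
  split_ifs with h <;> simp [isRot, h]

theorem isRot_mul_inv {n : ℕ} (x y : DihedralGroup n) :
    isRot (x * y⁻¹) = (isRot x == isRot y) := by
  cases x <;> cases y <;> rfl

theorem lab_injOn {n u v : ℕ} [NeZero n] (hu : u < 2 * n) (hv : v < 2 * n)
    (h : lab n u = lab n v) : u = v := by
  unfold lab at h
  have key : ∀ a b : ℕ, a < n → b < n → (a : ZMod n) = b → a = b := fun a b ha hb hab => by
    rw [ZMod.natCast_eq_natCast_iff'] at hab
    rwa [Nat.mod_eq_of_lt ha, Nat.mod_eq_of_lt hb] at hab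
  split_ifs at h with h1 h2 h2
  · exact key _ _ h1 h2 (DihedralGroup.r.inj h)
  · have := key _ _ (by omega) (by omega) (DihedralGroup.sr.inj h)
    omega

theorem stmt_14 (n : ℕ) [NeZero n] (hn : 2 ≤ n)
    (S : Finset (DihedralGroup n)) (hS1 : (1 : DihedralGroup n) ∉ S)
    (hSinv : ∀ s ∈ S, s⁻¹ ∈ S) (hSne : S.Nonempty) :
    ¬ ((∃ τ₁ : ℕ, 1 ≤ τ₁ ∧ ∃ u v : ℕ, u < 2 * n ∧ v < 2 * n ∧ u ≠ v ∧
          ((u < n ∧ v < n) ∨ (n ≤ u ∧ n ≤ v)) ∧ PST n S τ₁ (lab n u) (lab n v)) ∧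
       (∃ τ₂ : ℕ, 1 ≤ τ₂ ∧ ∃ x y : ℕ, x < 2 * n ∧ y < 2 * n ∧
          ((x < n ∧ n ≤ y) ∨ (y < n ∧ n ≤ x)) ∧ PST n S τ₂ (lab n x) (lab n y))) ∧
    ((∃ τ : ℕ, 1 ≤ τ ∧ ∃ u v : ℕ, u < 2 * n ∧ v < 2 * n ∧ u ≠ v ∧
        PST n S τ (lab n u) (lab n v)) →
      ((∀ τ u v : ℕ, 1 ≤ τ → u < 2 * n → v < 2 * n → u ≠ v →
          PST n S τ (lab n u) (lab n v) → ((u < n ∧ v < n) ∨ (n ≤ u ∧ n ≤ v))) ∨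
       (∀ τ u v : ℕ, 1 ≤ τ → u < 2 * n → v < 2 * n → u ≠ v →
          PST n S τ (lab n u) (lab n v) → ((u < n ∧ n ≤ v) ∨ (v < n ∧ n ≤ u))))) := by
  have key : ¬ ((∃ τ₁ : ℕ, 1 ≤ τ₁ ∧ ∃ u v : ℕ, u < 2 * n ∧ v < 2 * n ∧ u ≠ v ∧
          ((u < n ∧ v < n) ∨ (n ≤ u ∧ n ≤ v)) ∧ PST n S τ₁ (lab n u) (lab n v)) ∧
       (∃ τ₂ : ℕ, 1 ≤ τ₂ ∧ ∃ x y : ℕ, x < 2 * n ∧ y < 2 * n ∧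
          ((x < n ∧ n ≤ y) ∨ (y < n ∧ n ≤ x)) ∧ PST n S τ₂ (lab n x) (lab n y))) := by
    rintro ⟨⟨τ₁, -, u, v, hu, hv, huv, hsame, h₁⟩, ⟨τ₂, -, x, y, hx, hy, hdiff, h₂⟩⟩
    have hxy : x ≠ y := by omega
    have h := congrArg isRot (h₁.translation_unique hSinv (fun e => huv (lab_injOn hu hv e)) h₂
      (fun e => hxy (lab_injOn hx hy e)))
    -- The left side is a rotation, the right side a reflection.
    rw [isRot_mul_inv, isRot_mul_inv] at h
    simp only [isRot_lab] at h
    have hl : decide (v < n) = decide (u < n) := decide_eq_decide.mpr (by omega)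
    have hr : decide (y < n) ≠ decide (x < n) := fun e => by
      have := decide_eq_decide.mp e
      omega
    rw [hl, beq_self_eq_true] at h
    exact hr (beq_iff_eq.mp h.symm)
  refine ⟨key, fun _ => ?_⟩
  by_cases ha : ∃ τ₁ : ℕ, 1 ≤ τ₁ ∧ ∃ u v : ℕ, u < 2 * n ∧ v < 2 * n ∧ u ≠ v ∧
          ((u < n ∧ v < n) ∨ (n ≤ u ∧ n ≤ v)) ∧ PST n S τ₁ (lab n u) (lab n v)
  · left
    intro τ u v hτ hu hv huv h
    by_contra hc
    exact key ⟨ha, τ, hτ, u, v, hu, hv, by omega, h⟩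
  · right
    intro τ u v hτ hu hv huv h
    by_contra hc
    exact ha ⟨τ, hτ, u, v, hu, hv, huv, by omega, h⟩

end PaperPST
end
end
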